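/- Let H be a finite forest (an acyclic undirected graph) whose vertex set is partitioned into a set C_act of active vertices and a set C_dead of dead vertices. If every vertex of C_dead has degree at least 2 in H, then Σ_{v ∈ C_act} deg_H(v) ≤ 2·|C_act|. -/

import Mathlib

/-!
A forest on `n` vertices has at most `n` edges, since it extends to a spanning tree of the complete
graph (unless `n = 0`). So its degrees sum to at most `2n`; the dead vertices account for at least
`2` each, which leaves at most `2` per active vertex on average.
-/

theorem card_edgeFinset_le_of_isAcyclic {V : Type*} [Fintype V] [DecidableEq V]
    (H : SimpleGraph V) [DecidableRel H.Adj] (hforest : H.IsAcyclic) :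
    H.edgeFinset.card ≤ Fintype.card V := by
  classical
  rcases isEmpty_or_nonempty V with hV | hV
  · simp [Finset.card_eq_zero, Finset.eq_empty_of_isEmpty]
  · obtain ⟨T, hHT, -, hT⟩ :=
      (SimpleGraph.connected_top (V := V)).exists_isTree_le_of_le_of_isAcyclic le_top hforest
    have h1 := hT.card_edgeFinset
    have h2 := Finset.card_le_card (SimpleGraph.edgeFinset_mono hHT)
    omega

/--
Let `H` be a finite forest whose vertex set is partitioned into
active vertices `Cact` and dead vertices (the complement of `Cact`).  If every dead
vertex has degree at least `2` in `H`, then `∑_{v ∈ Cact} deg_H(v) ≤ 2·|Cact|`.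
-/
theorem stmt_3 {V : Type*} [Fintype V] [DecidableEq V]
    (H : SimpleGraph V) [DecidableRel H.Adj]
    (hforest : H.IsAcyclic)
    (Cact : Finset V)
    (hdead : ∀ v, v ∉ Cact → 2 ≤ H.degree v) :
    ∑ v ∈ Cact, H.degree v ≤ 2 * Cact.card := by
  have h1 := H.sum_degrees_eq_twice_card_edges
  have h2 := card_edgeFinset_le_of_isAcyclic H hforest
  have h3 := Finset.sum_add_sum_compl Cact (fun v => H.degree v)
  have h4 : Cactᶜ.card * 2 ≤ ∑ v ∈ Cactᶜ, H.degree v :=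
    Finset.card_nsmul_le_sum _ _ _ fun v hv => hdead v (Finset.mem_compl.mp hv)
  have h5 := Finset.card_add_card_compl Cact
  omega
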